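/- arXiv:math/0203179 — 2 statements merged into one kernel-verified Lean document; each statement's English description precedes it below -/
import Mathlib

section
/- Let (G, s) be an abelian group with a distinguished element s of order at most 2. Define A_1(G,s) as the abelian group generated by symbols Y[z_1,z_2,z_3] with z_i ∈ G, modulo: cyclic invariance Y[z_1,z_2,z_3] = Y[z_2,z_3,z_1]; antisymmetry Y[z_1,z_2,z_3] = -Y[z_2,z_1,z_3]; multilinearity Y[z_0+z_1,z_2,z_3] = Y[z_0,z_2,z_3] + Y[z_1,z_2,z_3]; and the slide relation Y[z_1,z_1,z_2] = Y[s,z_1,z_2]. Then when s = 0, A_1(G,0) is isomorphic to Λ^3 G, via Y[z_1,z_2,z_3] ↦ z_1 ∧ z_2 ∧ z_3. -/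
/-- The relations defining `A_1(G,s)`: cyclic invariance, antisymmetry, multilinearity,
and the slide relation `Y[z,z,w] = Y[s,z,w]`. -/
def YRel (G : Type*) [AddCommGroup G] (s : G) : Set (FreeAbelianGroup (G × G × G)) :=
  {x | ∃ z₁ z₂ z₃ : G, x = FreeAbelianGroup.of (z₁, z₂, z₃)
        - FreeAbelianGroup.of (z₂, z₃, z₁)} ∪
  {x | ∃ z₁ z₂ z₃ : G, x = FreeAbelianGroup.of (z₁, z₂, z₃)
        + FreeAbelianGroup.of (z₂, z₁, z₃)} ∪
  {x | ∃ z₀ z₁ z₂ z₃ : G, x = FreeAbelianGroup.of (z₀ + z₁, z₂, z₃)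
        - FreeAbelianGroup.of (z₀, z₂, z₃) - FreeAbelianGroup.of (z₁, z₂, z₃)} ∪
  {x | ∃ z₁ z₂ : G, x = FreeAbelianGroup.of (z₁, z₁, z₂)
        - FreeAbelianGroup.of (s, z₁, z₂)}

/-- The abelian group `A_1(G,s)`, generated by symbols `Y[z₁,z₂,z₃]` (`zᵢ ∈ G`) modulo
cyclic invariance, antisymmetry, multilinearity and the slide relation. -/
def A1 (G : Type*) [AddCommGroup G] (s : G) :=
  FreeAbelianGroup (G × G × G) ⧸ AddSubgroup.closure (YRel G s)

instance (G : Type*) [AddCommGroup G] (s : G) : AddCommGroup (A1 G s) :=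
  QuotientAddGroup.Quotient.addCommGroup _

/-- The generator `Y[z₁,z₂,z₃]` of `A_1(G,s)`. -/
def Ygen {G : Type*} [AddCommGroup G] (s : G) (z₁ z₂ z₃ : G) : A1 G s :=
  QuotientAddGroup.mk' _ (FreeAbelianGroup.of (z₁, z₂, z₃))

/-- The wedge product `a ∧ b ∧ c` as an element of the third exterior power. -/
noncomputable def wedge3 {R M : Type*} [CommRing R] [AddCommGroup M] [Module R M]
    (a b c : M) : ⋀[R]^3 M :=
  ⟨ExteriorAlgebra.ιMulti R 3 ![a, b, c],
    ExteriorAlgebra.ιMulti_range R 3 ⟨![a, b, c], rfl⟩⟩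

/-!
Both groups represent the functor of alternating trilinear maps out of `G`. Cyclic invariance
spreads additivity of `Y` from the first slot to all three, so `Y` is trilinear for every `s`. For
`s = 0` the slide relation reads `Y[z,z,w] = Y[0,z,w] = 0`, which makes `Y` alternating; conversely
every alternating trilinear map satisfies the four defining relations of `A_1(G,0)`.
-/

section AlternatingMap

variable {R M N : Type*} [Semiring R] [AddCommMonoid M] [Module R M] [AddCommGroup N] [Module R N]

open Matrix in
theorem alternatingMap_vecCons_swap {n : ℕ} (f : M [⋀^Fin (n + 2)]→ₗ[R] N) (a b : M)
    (v : Fin n → M) : f (vecCons b (vecCons a v)) = -f (vecCons a (vecCons b v)) := by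
  rw [← f.map_swap _ (Fin.zero_ne_one (n := n))]
  congr 1
  ext i
  refine Fin.cases rfl (fun j => Fin.cases rfl (fun k => ?_) j) i
  rw [Function.comp_apply,
    Equiv.swap_apply_of_ne_of_ne (Fin.succ_ne_zero _) (Fin.succ_succ_ne_one k)]
  rfl

theorem alternatingMap_three_rotate (f : M [⋀^Fin 3]→ₗ[R] N) (a b c : M) :
    f ![b, c, a] = f ![a, b, c] := by
  have rotate_eq : ![b, c, a] = ![a, b, c] ∘ finRotate 3 := by
    ext i
    fin_cases i <;> rfl
  rw [rotate_eq, f.map_perm, sign_finRotate, neg_one_sq, one_smul]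

end AlternatingMap

theorem linearMap_ext_wedge3 {R M P : Type*} [CommRing R] [AddCommGroup M] [Module R M]
    [AddCommGroup P] [Module R P] {f g : ⋀[R]^3 M →ₗ[R] P}
    (h : ∀ a b c : M, f (wedge3 a b c) = g (wedge3 a b c)) : f = g := by
  refine exteriorPower.linearMap_ext (AlternatingMap.ext fun v => ?_)
  rw [← FinVec.etaExpand_eq v]
  exact h (v 0) (v 1) (v 2)

namespace A1

variable {G N : Type*} [AddCommGroup G] [AddCommGroup N]

section Relations

variable (s : G)

theorem Ygen_rotate (a b c : G) : Ygen s b c a = Ygen s a b c :=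
  (sub_eq_zero.mp <| (QuotientAddGroup.eq_zero_iff _).mpr <|
    AddSubgroup.subset_closure (.inl (.inl (.inl ⟨a, b, c, rfl⟩)))).symm

theorem Ygen_add_left (a a' b c : G) :
    Ygen s (a + a') b c = Ygen s a b c + Ygen s a' b c :=
  sub_eq_zero.mp <| (sub_sub _ _ _).symm.trans <| (QuotientAddGroup.eq_zero_iff _).mpr <|
    AddSubgroup.subset_closure (.inl (.inr ⟨a, a', b, c, rfl⟩))

theorem Ygen_slide (a b : G) : Ygen s a a b = Ygen s s a b :=
  sub_eq_zero.mp <| (QuotientAddGroup.eq_zero_iff _).mpr <|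
    AddSubgroup.subset_closure (.inr ⟨a, b, rfl⟩)

/-- The symbol `Y[-,b,c]` as a homomorphism in its first slot; through it `Y` inherits
`map_zero` and `map_zsmul`. -/
def YgenHom (b c : G) : G →+ A1 G s :=
  AddMonoidHom.mk' (fun a => Ygen s a b c) (fun a a' => Ygen_add_left s a a' b c)

theorem Ygen_zsmul_left (n : ℤ) (a b c : G) : Ygen s (n • a) b c = n • Ygen s a b c :=
  (YgenHom s b c).map_zsmul n a

/-- The symbol `Y` as a `ℤ`-trilinear map on `G`. -/
def YMultilinear : MultilinearMap ℤ (fun _ : Fin 3 => G) (A1 G s) :=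
  MultilinearMap.mk' (fun v => Ygen s (v 0) (v 1) (v 2))
    (fun v i x y => by
      fin_cases i
      · simp [Ygen_add_left]
      · simp [← Ygen_rotate s (v 0), Ygen_add_left]
      · simp [Ygen_rotate s _ (v 0) (v 1), Ygen_add_left])
    (fun v i n x => by
      fin_cases i
      · simp [Ygen_zsmul_left]
      · simp [← Ygen_rotate s (v 0), Ygen_zsmul_left]
      · simp [Ygen_rotate s _ (v 0) (v 1), Ygen_zsmul_left])

end Relations

section UniversalProperty

/-- The defining relations of `A_1(G,s)`, as a condition on a function of three variables: exactly
these functions extend to homomorphisms out of `A_1(G,s)`. -/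
structure IsSymbol (s : G) (f : G → G → G → N) : Prop where
  rotate : ∀ a b c, f b c a = f a b c
  swap : ∀ a b c, f b a c = -f a b c
  add_left : ∀ a a' b c, f (a + a') b c = f a b c + f a' b c
  slide : ∀ a b, f a a b = f s a b

variable {s : G}

/-- The homomorphism out of `A_1(G,s)` induced by a function satisfying the defining relations. -/
def lift (f : G → G → G → N) (hf : IsSymbol s f) : A1 G s →+ N :=
  QuotientAddGroup.lift _ (FreeAbelianGroup.lift fun p : G × G × G => f p.1 p.2.1 p.2.2) <| by
    rw [AddSubgroup.closure_le]
    rintro x (((⟨a, b, c, rfl⟩ | ⟨a, b, c, rfl⟩) | ⟨a, a', b, c, rfl⟩) | ⟨a, b, rfl⟩) <;>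
      simp only [SetLike.mem_coe, AddMonoidHom.mem_ker, map_sub, map_add,
        FreeAbelianGroup.lift_apply_of]
    · rw [hf.rotate a b c, sub_self]
    · rw [hf.swap a b c, add_neg_cancel]
    · rw [hf.add_left, sub_sub, sub_self]
    · rw [hf.slide, sub_self]

theorem lift_Ygen (f : G → G → G → N) (hf : IsSymbol s f) (a b c : G) :
    lift f hf (Ygen s a b c) = f a b c :=
  FreeAbelianGroup.lift_apply_of _ _

theorem hom_ext {f g : A1 G s →+ N} (h : ∀ a b c, f (Ygen s a b c) = g (Ygen s a b c)) :
    f = g :=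
  QuotientAddGroup.addMonoidHom_ext _ <| FreeAbelianGroup.lift_ext _ _ fun ⟨a, b, c⟩ => h a b c

end UniversalProperty

section ZeroDistinguished

theorem Ygen_zero_self_left (a b : G) : Ygen (0 : G) a a b = 0 :=
  (Ygen_slide 0 a b).trans (YgenHom 0 a b).map_zero

/-- The symbol `Y` of `A_1(G,0)` as an alternating `ℤ`-trilinear map on `G`. -/
def YAlternating (G : Type*) [AddCommGroup G] : G [⋀^Fin 3]→ₗ[ℤ] A1 G (0 : G) where
  __ := YMultilinear 0
  map_eq_zero_of_eq' v i j hv hij := by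
    change Ygen 0 (v 0) (v 1) (v 2) = 0
    obtain h | h | h : v 0 = v 1 ∨ v 1 = v 2 ∨ v 2 = v 0 := by
      fin_cases i <;> fin_cases j <;> simp_all
    · rw [h, Ygen_zero_self_left]
    · rw [← Ygen_rotate, h, Ygen_zero_self_left]
    · rw [Ygen_rotate, h, Ygen_zero_self_left]

theorem isSymbol_zero_of_alternatingMap (f : G [⋀^Fin 3]→ₗ[ℤ] N) :
    IsSymbol (0 : G) (fun a b c => f ![a, b, c]) where
  rotate := alternatingMap_three_rotate f
  swap a b c := alternatingMap_vecCons_swap f a b ![c]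
  add_left a a' b c := f.map_vecCons_add ![b, c] a a'
  slide a b :=
    calc f ![a, a, b]
      _ = 0 := f.map_eq_zero_of_eq _ (i := 0) (j := 1) rfl Fin.zero_ne_one
      _ = f ![0, a, b] := (f.map_coord_zero 0 rfl).symm

/-- The homomorphism out of `A_1(G,0)` induced by an alternating `ℤ`-trilinear map. -/
def liftAlternating (f : G [⋀^Fin 3]→ₗ[ℤ] N) : A1 G (0 : G) →+ N :=
  lift (fun a b c => f ![a, b, c]) (isSymbol_zero_of_alternatingMap f)

theorem liftAlternating_Ygen (f : G [⋀^Fin 3]→ₗ[ℤ] N) (a b c : G) :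
    liftAlternating f (Ygen 0 a b c) = f ![a, b, c] :=
  lift_Ygen _ (isSymbol_zero_of_alternatingMap f) a b c

/-- The homomorphism `A_1(G,0) → Λ³G` sending `Y[a,b,c]` to `a ∧ b ∧ c`. -/
noncomputable def toExteriorPower (G : Type*) [AddCommGroup G] : A1 G (0 : G) →+ ⋀[ℤ]^3 G :=
  liftAlternating (exteriorPower.ιMulti ℤ 3)

theorem toExteriorPower_Ygen (a b c : G) : toExteriorPower G (Ygen 0 a b c) = wedge3 a b c :=
  liftAlternating_Ygen _ a b c

/-- The homomorphism `Λ³G → A_1(G,0)` sending `a ∧ b ∧ c` to `Y[a,b,c]`. -/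
noncomputable def ofExteriorPower (G : Type*) [AddCommGroup G] : ⋀[ℤ]^3 G →ₗ[ℤ] A1 G (0 : G) :=
  exteriorPower.alternatingMapLinearEquiv (YAlternating G)

theorem ofExteriorPower_wedge3 (a b c : G) : ofExteriorPower G (wedge3 a b c) = Ygen 0 a b c :=
  exteriorPower.alternatingMapLinearEquiv_apply_ιMulti (YAlternating G) ![a, b, c]

theorem ofExteriorPower_comp_toExteriorPower :
    (ofExteriorPower G).toAddMonoidHom.comp (toExteriorPower G) = AddMonoidHom.id _ :=
  hom_ext fun a b c =>
    (congrArg (ofExteriorPower G) (toExteriorPower_Ygen a b c)).trans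
      (ofExteriorPower_wedge3 a b c)

theorem toExteriorPower_comp_ofExteriorPower :
    (toExteriorPower G).toIntLinearMap ∘ₗ ofExteriorPower G = LinearMap.id :=
  linearMap_ext_wedge3 fun a b c =>
    (congrArg (toExteriorPower G) (ofExteriorPower_wedge3 a b c)).trans
      (toExteriorPower_Ygen a b c)

/-- The isomorphism `A_1(G,0) ≃ Λ³G`. -/
noncomputable def equivExteriorPower (G : Type*) [AddCommGroup G] : A1 G (0 : G) ≃+ ⋀[ℤ]^3 G :=
  (toExteriorPower G).toAddEquiv (ofExteriorPower G).toAddMonoidHom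
    ofExteriorPower_comp_toExteriorPower
    (congrArg LinearMap.toAddMonoidHom toExteriorPower_comp_ofExteriorPower)

end ZeroDistinguished

end A1

/-- For `(G,s)` with `s = 0`, the group `A_1(G,0)` is isomorphic to `Λ³G` (the third exterior
power of `G` over `ℤ`), via `Y[z₁,z₂,z₃] ↦ z₁ ∧ z₂ ∧ z₃`. -/
theorem A1_of_zero_iso_lambda3 (G : Type*) [AddCommGroup G] :
    ∃ e : A1 G (0 : G) ≃+ ⋀[ℤ]^3 G,
      ∀ z₁ z₂ z₃ : G, e (Ygen (0 : G) z₁ z₂ z₃) = wedge3 z₁ z₂ z₃ :=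
  ⟨A1.equivExteriorPower G, A1.toExteriorPower_Ygen⟩
end

section
/- Let H = Z^{2g} and define ν : Λ^3 H → H ⊗ L_2(H) by ν(x ∧ y ∧ z) = x ⊗ [y,z] + y ⊗ [z,x] + z ⊗ [x,y], where L_2(H) is the degree-2 part of the free Lie ring on H. Then ν is well-defined, injective, and its composition with the bracketing map H ⊗ L_2(H) → L_3(H), h ⊗ u ↦ [h,u], is zero; that is, the sequence 0 → Λ^3 H → H ⊗ L_2(H) → L_3(H) is exact at the first two spots. -/
/-- `H = ℤ^{2g}` with basis indexed by `Fin g ⊕ Fin g` (`Sum.inl i = x_i`, `Sum.inr i = y_i`). -/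
abbrev Hgrp (g : ℕ) := Fin g ⊕ Fin g → ℤ

/-- The symplectic intersection form `•` on `H`. -/
def isym (g : ℕ) (a b : Hgrp g) : ℤ :=
  ∑ i : Fin g, (a (Sum.inl i) * b (Sum.inr i) - a (Sum.inr i) * b (Sum.inl i))

open scoped TensorProduct

/-- The free Lie ring over `ℤ` on generators indexed by `Fin g ⊕ Fin g`. -/
abbrev FreeLie (g : ℕ) := FreeLieAlgebra ℤ (Fin g ⊕ Fin g)

/-- The embedding of `H = ℤ^{2g}` onto the degree-1 part of the free Lie ring,
sending the `j`-th basis vector to the `j`-th generator. -/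
noncomputable def linH (g : ℕ) : Hgrp g →ₗ[ℤ] FreeLie g :=
  (Pi.basisFun ℤ (Fin g ⊕ Fin g)).constr ℤ (fun j => FreeLieAlgebra.of ℤ j)

/-- The wedge product `a ∧ b` as an element of the second exterior power. -/
noncomputable def wedge2 {R M : Type*} [CommRing R] [AddCommGroup M] [Module R M]
    (a b : M) : ⋀[R]^2 M :=
  ⟨ExteriorAlgebra.ιMulti R 2 ![a, b],
    ExteriorAlgebra.ιMulti_range R 2 ⟨![a, b], rfl⟩⟩

/-!
Let `M` be free with ordered basis `b`, and `L` the free Lie algebra on `M`. The sequence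
`0 → ⋀³M → M ⊗ ⋀²M → L` has a contracting homotopy:
* `ρ : M ⊗ ⋀²M → ⋀³M` keeps `bᵢ ∧ bⱼ ∧ bₖ` from `bᵢ ⊗ bⱼ ∧ bₖ` exactly when `i` is the smallest
  index, so that `ρ ∘ ν = id`, because `ν` of a basis trivector has a single such term;
* the brackets `[bᵢ, [bⱼ, bₖ]]` with `j < k`, `j ≤ i` form the Hall basis of `L₃`, and expanding
  them into noncommutative words yields a linear map `σ` with `id = ν ∘ ρ + σ ∘ [ , ]`.

The first identity gives injectivity, the second exactness in the middle, over any commutative ring.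
-/

section ExteriorPowers

variable {R M N : Type*} [CommRing R] [AddCommGroup M] [Module R M] [AddCommGroup N] [Module R N]

lemma wedge2_swap (x y : M) : (wedge2 x y : ⋀[R]^2 M) = -wedge2 y x := by
  have h := (exteriorPower.ιMulti R 2).map_swap ![y, x] (show (0 : Fin 2) ≠ 1 by decide)
  rwa [show ![y, x] ∘ Equiv.swap 0 1 = ![x, y] by ext i; fin_cases i <;> rfl] at h

lemma wedge3_rotate (x y z : M) : (wedge3 y z x : ⋀[R]^3 M) = wedge3 x y z := by
  have h := (exteriorPower.ιMulti R 3).map_perm ![x, y, z] (finRotate 3)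
  rw [show ![x, y, z] ∘ finRotate 3 = ![y, z, x] by ext i; fin_cases i <;> rfl,
    show Equiv.Perm.sign (finRotate 3) = 1 by decide, one_smul] at h
  exact h

lemma exteriorSquare_hom_ext_basis {κ : Type*} [LinearOrder κ] (b : Module.Basis κ R M)
    {f g : ⋀[R]^2 M →ₗ[R] N}
    (h : ∀ i j, i < j → f (wedge2 (b i) (b j)) = g (wedge2 (b i) (b j))) : f = g := by
  refine exteriorPower.linearMap_ext (b.ext_alternating fun v hv => ?_)
  have hbv : (fun i => b (v i)) = ![b (v 0), b (v 1)] := by ext i; fin_cases i <;> rfl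
  rw [hbv]
  change f (wedge2 (b (v 0)) (b (v 1))) = g (wedge2 (b (v 0)) (b (v 1)))
  rcases lt_or_gt_of_ne (hv.ne (show (0 : Fin 2) ≠ 1 by decide)) with hlt | hgt
  · exact h _ _ hlt
  · rw [wedge2_swap, map_neg, map_neg, h _ _ hgt]

lemma exteriorCube_hom_ext {f g : ⋀[R]^3 M →ₗ[R] N}
    (h : ∀ x y z, f (wedge3 x y z) = g (wedge3 x y z)) : f = g := by
  refine exteriorPower.linearMap_ext (AlternatingMap.ext fun v => ?_)
  have hv : v = ![v 0, v 1, v 2] := by ext i; fin_cases i <;> rfl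
  rw [hv]
  exact h _ _ _

lemma exteriorCube_hom_ext_basis {κ : Type*} (b : Module.Basis κ R M) {f g : ⋀[R]^3 M →ₗ[R] N}
    (h : ∀ i j k, i ≠ j → j ≠ k → k ≠ i →
      f (wedge3 (b i) (b j) (b k)) = g (wedge3 (b i) (b j) (b k))) : f = g := by
  refine exteriorPower.linearMap_ext (b.ext_alternating fun v hv => ?_)
  have hbv : (fun i => b (v i)) = ![b (v 0), b (v 1), b (v 2)] := by ext i; fin_cases i <;> rfl
  rw [hbv]
  exact h _ _ _ (hv.ne (by decide)) (hv.ne (by decide)) (hv.ne (by decide))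

lemma tensor_exteriorSquare_hom_ext_basis {κ : Type*} [LinearOrder κ] (b : Module.Basis κ R M)
    {f g : M ⊗[R] ⋀[R]^2 M →ₗ[R] N}
    (h : ∀ i j k, j < k →
      f (b i ⊗ₜ wedge2 (b j) (b k)) = g (b i ⊗ₜ wedge2 (b j) (b k))) : f = g :=
  TensorProduct.ext (b.ext fun i => exteriorSquare_hom_ext_basis b (h i))

/-- The linear map `x ∧ y ↦ B x y` on the exterior square induced by an alternating bilinear
map `B`. -/
noncomputable def exteriorSquareLift (B : M →ₗ[R] M →ₗ[R] N) (hB : B.IsAlt) : ⋀[R]^2 M →ₗ[R] N :=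
  exteriorPower.alternatingMapLinearEquiv
    { LinearMap.uncurryLeft
        ((MultilinearMap.ofSubsingletonₗ R R M N (0 : Fin 1)).toLinearMap ∘ₗ B) with
      map_eq_zero_of_eq' := by
        intro v i j hv hij
        have h01 : v 0 = v 1 := by fin_cases i <;> fin_cases j <;> simp_all
        change B (v 0) (v 1) = 0
        rw [h01, hB] }

lemma exteriorSquareLift_wedge2 (B : M →ₗ[R] M →ₗ[R] N) (hB : B.IsAlt) (x y : M) :
    exteriorSquareLift B hB (wedge2 x y) = B x y :=
  exteriorPower.alternatingMapLinearEquiv_apply_ιMulti _ ![x, y]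

end ExteriorPowers

section Complex

variable (R M : Type*) [CommRing R] [AddCommGroup M] [Module R M]

/-- The map `ν`, obtained by alternatizing `(x, y, z) ↦ x ⊗ (y ∧ z)`. -/
noncomputable def nu : ⋀[R]^3 M →ₗ[R] M ⊗[R] ⋀[R]^2 M :=
  exteriorPower.alternatingMapLinearEquiv <| AlternatingMap.alternatizeUncurryFin <|
    exteriorPower.alternatingMapLinearEquiv.symm.toLinearMap ∘ₗ TensorProduct.mk R M (⋀[R]^2 M)

variable {R M}

lemma nu_wedge3 (x y z : M) :
    nu R M (wedge3 x y z) = x ⊗ₜ wedge2 y z + y ⊗ₜ wedge2 z x + z ⊗ₜ wedge2 x y := by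
  refine (exteriorPower.alternatingMapLinearEquiv_apply_ιMulti _ ![x, y, z]).trans ?_
  have h0 : (0 : Fin 3).removeNth ![x, y, z] = ![y, z] := by ext i; fin_cases i <;> rfl
  have h1 : (1 : Fin 3).removeNth ![x, y, z] = ![x, z] := by ext i; fin_cases i <;> rfl
  have h2 : (2 : Fin 3).removeNth ![x, y, z] = ![x, y] := by ext i; fin_cases i <;> rfl
  rw [AlternatingMap.alternatizeUncurryFin_apply, Fin.sum_univ_three, h0, h1, h2]
  change (-1) ^ 0 • x ⊗ₜ wedge2 y z + (-1) ^ 1 • y ⊗ₜ wedge2 x z + (-1) ^ 2 • z ⊗ₜ wedge2 x y = _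
  rw [wedge2_swap z x, TensorProduct.tmul_neg]
  simp

variable {L : Type*} [LieRing L] [LieAlgebra R L]

/-- The map `x ∧ y ↦ [f x, f y]`; for `f` the inclusion of generators, the isomorphism of `⋀²M` with
the degree-2 part of the free Lie algebra. -/
noncomputable def exteriorSquareBracket (f : M →ₗ[R] L) : ⋀[R]^2 M →ₗ[R] L :=
  exteriorSquareLift (LinearMap.compl₁₂ (LieModule.toEnd R L L : L →ₗ[R] L →ₗ[R] L) f f)
    fun x => lie_self (f x)

lemma exteriorSquareBracket_wedge2 (f : M →ₗ[R] L) (x y : M) :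
    exteriorSquareBracket f (wedge2 x y) = ⁅f x, f y⁆ :=
  exteriorSquareLift_wedge2 _ _ x y

/-- The bracketing map `h ⊗ (x ∧ y) ↦ [f h, [f x, f y]]`. -/
noncomputable def bracketMap (f : M →ₗ[R] L) : M ⊗[R] ⋀[R]^2 M →ₗ[R] L :=
  (LieModule.toModuleHom R L L : L ⊗[R] L →ₗ[R] L) ∘ₗ TensorProduct.map f (exteriorSquareBracket f)

lemma bracketMap_tmul_wedge2 (f : M →ₗ[R] L) (h x y : M) :
    bracketMap f (h ⊗ₜ wedge2 x y) = ⁅f h, ⁅f x, f y⁆⁆ := by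
  simp [bracketMap, exteriorSquareBracket_wedge2]

lemma bracketMap_comp_nu (f : M →ₗ[R] L) : bracketMap f ∘ₗ nu R M = 0 :=
  exteriorCube_hom_ext fun x y z => by
    simp only [LinearMap.comp_apply, nu_wedge3, map_add, bracketMap_tmul_wedge2, lie_jacobi,
      LinearMap.zero_apply]

end Complex

section ContractingHomotopy

variable {R M κ : Type*} [CommRing R] [AddCommGroup M] [Module R M] [LinearOrder κ]
  (b : Module.Basis κ R M)

/-- The component `ρ : M ⊗ ⋀²M → ⋀³M` of the contracting homotopy. For each `i`, the map
`bⱼ ∧ bₖ ↦ bᵢ ∧ bⱼ ∧ bₖ` is restricted to `i < j, k` by killing all other basis vectors first. -/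
noncomputable def nuRetraction : M ⊗[R] ⋀[R]^2 M →ₗ[R] ⋀[R]^3 M :=
  TensorProduct.lift <| b.constr R fun i => exteriorPower.alternatingMapLinearEquiv <|
    ((exteriorPower.ιMulti R 3).curryLeft (b i)).compLinearMap
      (b.constr R fun j => if i < j then b j else 0)

lemma nuRetraction_tmul_wedge2 (i j k : κ) :
    nuRetraction b (b i ⊗ₜ wedge2 (b j) (b k)) =
      if i < j ∧ i < k then wedge3 (b i) (b j) (b k) else 0 := by
  have h : nuRetraction b (b i ⊗ₜ wedge2 (b j) (b k)) =
      wedge3 (b i) (if i < j then b j else 0) (if i < k then b k else 0) := by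
    rw [nuRetraction, TensorProduct.lift.tmul, b.constr_basis]
    refine (exteriorPower.alternatingMapLinearEquiv_apply_ιMulti _ ![b j, b k]).trans ?_
    refine congrArg (exteriorPower.ιMulti R 3) ?_
    ext l
    fin_cases l
    · rfl
    · exact b.constr_basis R _ j
    · exact b.constr_basis R _ k
  rw [h]
  by_cases hj : i < j
  · by_cases hk : i < k
    · simp only [hj, hk, and_self, if_true]
    · simp only [hk, and_false, if_false]
      exact (exteriorPower.ιMulti R 3).map_coord_zero 2 rfl
  · simp only [hj, false_and, if_false]
    exact (exteriorPower.ιMulti R 3).map_coord_zero 1 rfl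

lemma nuRetraction_comp_nu : nuRetraction b ∘ₗ nu R M = LinearMap.id := by
  refine exteriorCube_hom_ext_basis b fun i j k hij hjk hki => ?_
  simp only [LinearMap.comp_apply, nu_wedge3, map_add, nuRetraction_tmul_wedge2, LinearMap.id_apply]
  rw [wedge3_rotate (b i), ← wedge3_rotate (b k)]
  generalize (wedge3 (b i) (b j) (b k) : ⋀[R]^3 M) = w
  grind

/-- The linear map on noncommutative polynomials that reads off the Hall basis coordinates of an
element of `L₃`: the coefficient of `[bₖ, [bᵢ, bⱼ]]` with `i < j` and `i < k` is minus that of the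
word `bᵢ bⱼ bₖ`, and the coefficient of `[bᵢ, [bᵢ, bₖ]]` with `i < k` is that of `bᵢ bᵢ bₖ`. -/
noncomputable def wordSection : FreeAlgebra R κ →ₗ[R] M ⊗[R] ⋀[R]^2 M :=
  (FreeAlgebra.basisFreeMonoid R κ).constr R fun w =>
    match w.toList with
    | [i, j, k] =>
      if i < j ∧ i < k then -(b k ⊗ₜ wedge2 (b i) (b j))
      else if i = j ∧ i < k then b i ⊗ₜ wedge2 (b i) (b k)
      else 0
    | _ => 0

lemma wordSection_ι_mul_ι_mul_ι (i j k : κ) :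
    wordSection b (FreeAlgebra.ι R i * FreeAlgebra.ι R j * FreeAlgebra.ι R k) =
      if i < j ∧ i < k then -(b k ⊗ₜ wedge2 (b i) (b j))
      else if i = j ∧ i < k then b i ⊗ₜ wedge2 (b i) (b k)
      else 0 := by
  have h : FreeAlgebra.ι R i * FreeAlgebra.ι R j * FreeAlgebra.ι R k =
      FreeAlgebra.basisFreeMonoid R κ (.of i * .of j * .of k) := by
    simp [FreeAlgebra.basisFreeMonoid, FreeAlgebra.equivMonoidAlgebraFreeMonoid]
  rw [h, wordSection, Module.Basis.constr_basis]
  rfl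

attribute [local instance] LieRing.ofAssociativeRing in
/-- The component `σ : L → M ⊗ ⋀²M` of the contracting homotopy, sending each Hall basis element
`[bᵢ, [bⱼ, bₖ]]` of `L₃` to `bᵢ ⊗ (bⱼ ∧ bₖ)`. -/
noncomputable def hallSection : FreeLieAlgebra R κ →ₗ[R] M ⊗[R] ⋀[R]^2 M :=
  wordSection b ∘ₗ
    (FreeLieAlgebra.lift R (FreeAlgebra.ι R (X := κ)) : FreeLieAlgebra R κ →ₗ[R] FreeAlgebra R κ)

attribute [local instance] LieRing.ofAssociativeRing in
lemma hallSection_lie_lie {i j k : κ} (hjk : j < k) :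
    hallSection b ⁅FreeLieAlgebra.of R i, ⁅FreeLieAlgebra.of R j, FreeLieAlgebra.of R k⁆⁆ =
      if i < j then b j ⊗ₜ wedge2 (b i) (b k) - b k ⊗ₜ wedge2 (b i) (b j)
      else b i ⊗ₜ wedge2 (b j) (b k) := by
  have hwords :
      hallSection b ⁅FreeLieAlgebra.of R i, ⁅FreeLieAlgebra.of R j, FreeLieAlgebra.of R k⁆⁆ =
        wordSection b (FreeAlgebra.ι R i * FreeAlgebra.ι R j * FreeAlgebra.ι R k)
        - wordSection b (FreeAlgebra.ι R i * FreeAlgebra.ι R k * FreeAlgebra.ι R j)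
        - wordSection b (FreeAlgebra.ι R j * FreeAlgebra.ι R k * FreeAlgebra.ι R i)
        + wordSection b (FreeAlgebra.ι R k * FreeAlgebra.ι R j * FreeAlgebra.ι R i) := by
    simp only [hallSection, LinearMap.comp_apply, LieHom.coe_toLinearMap, LieHom.map_lie,
      FreeLieAlgebra.lift_of_apply, Ring.lie_def, mul_sub, sub_mul, map_sub, ← mul_assoc]
    abel
  rw [hwords]
  simp only [wordSection_ι_mul_ι_mul_ι]
  rcases lt_trichotomy i j with hij | rfl | hji
  · have hik := hij.trans hjk
    simp only [hij, hik, and_self, if_true, sub_neg_eq_add, hij.not_gt, and_false, if_false,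
      sub_zero, hik.not_gt, add_zero]
    abel
  · simp [hjk, hjk.not_gt, hjk.ne]
  · simp [hji, hji.not_gt, hji.ne', hjk, hjk.not_gt, hjk.ne']

lemma nu_comp_nuRetraction_add_hallSection_comp_bracketMap :
    nu R M ∘ₗ nuRetraction b + hallSection b ∘ₗ bracketMap (b.constr R (FreeLieAlgebra.of R)) =
      LinearMap.id := by
  refine tensor_exteriorSquare_hom_ext_basis b fun i j k hjk => ?_
  simp only [LinearMap.add_apply, LinearMap.comp_apply, nuRetraction_tmul_wedge2,
    bracketMap_tmul_wedge2, b.constr_basis, LinearMap.id_apply, hallSection_lie_lie b hjk]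
  by_cases hij : i < j
  · simp only [hij, hij.trans hjk, and_self, if_true, nu_wedge3]
    rw [wedge2_swap (b k), TensorProduct.tmul_neg]
    abel
  · simp only [hij, false_and, if_false, map_zero, zero_add]

end ContractingHomotopy

theorem nu_injective_and_exact_general {R κ M : Type*} [CommRing R] [AddCommGroup M] [Module R M]
    (b : Module.Basis κ R M) :
    ∃ (ν : ⋀[R]^3 M →ₗ[R] M ⊗[R] ⋀[R]^2 M)
      (brk : M ⊗[R] ⋀[R]^2 M →ₗ[R] FreeLieAlgebra R κ),
      (∀ x y z : M, ν (wedge3 x y z)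
          = x ⊗ₜ wedge2 y z + y ⊗ₜ wedge2 z x + z ⊗ₜ wedge2 x y) ∧
      (∀ h x y : M, brk (h ⊗ₜ wedge2 x y)
          = ⁅b.constr R (FreeLieAlgebra.of R) h,
              ⁅b.constr R (FreeLieAlgebra.of R) x, b.constr R (FreeLieAlgebra.of R) y⁆⁆) ∧
      Function.Injective ν ∧
      (∀ w, brk (ν w) = 0) ∧
      LinearMap.range ν = LinearMap.ker brk := by
  let _ : LinearOrder κ := IsWellOrder.linearOrder WellOrderingRel
  set f := b.constr R (FreeLieAlgebra.of R)
  refine ⟨nu R M, bracketMap f, nu_wedge3, bracketMap_tmul_wedge2 f,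
    LinearMap.injective_of_comp_eq_id _ _ (nuRetraction_comp_nu b),
    LinearMap.congr_fun (bracketMap_comp_nu f), ?_⟩
  refine le_antisymm (LinearMap.range_le_ker_iff.mpr (bracketMap_comp_nu f)) fun w hw => ?_
  have hsplit : nu R M (nuRetraction b w) + hallSection b (bracketMap f w) = w :=
    LinearMap.congr_fun (nu_comp_nuRetraction_add_hallSection_comp_bracketMap b) w
  rw [LinearMap.mem_ker.mp hw, map_zero, add_zero] at hsplit
  exact ⟨nuRetraction b w, hsplit⟩

/-- The map `ν : Λ³H → H ⊗ L₂(H)` (with `L₂(H) ≅ Λ²H`),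
`ν(x∧y∧z) = x⊗[y,z] + y⊗[z,x] + z⊗[x,y]`, is well defined and injective, and the sequence
`0 → Λ³H → H ⊗ L₂(H) → L₃(H)` is exact at the first two spots, where the second map is the
bracketing map `h ⊗ u ↦ [h,u]` into the free Lie ring. -/
theorem nu_injective_and_exact (g : ℕ) :
    ∃ (ν : ⋀[ℤ]^3 (Hgrp g) →ₗ[ℤ] Hgrp g ⊗[ℤ] ⋀[ℤ]^2 (Hgrp g))
      (brk : Hgrp g ⊗[ℤ] ⋀[ℤ]^2 (Hgrp g) →ₗ[ℤ] FreeLie g),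
      (∀ x y z : Hgrp g, ν (wedge3 x y z)
          = x ⊗ₜ wedge2 y z + y ⊗ₜ wedge2 z x + z ⊗ₜ wedge2 x y) ∧
      (∀ (h x y : Hgrp g), brk (h ⊗ₜ wedge2 x y)
          = ⁅linH g h, ⁅linH g x, linH g y⁆⁆) ∧
      Function.Injective ν ∧
      (∀ w, brk (ν w) = 0) ∧
      LinearMap.range ν = LinearMap.ker brk := by
  exact nu_injective_and_exact_general (Pi.basisFun ℤ (Fin g ⊕ Fin g))
end
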